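/- Let k ≥ 1 be an integer and let r, r₁, r₂, r₃, r₄ be exponents with 1 < r, r₂, r₄ < ∞, 1 ≤ r₁, r₃ ≤ ∞, and 1/r₁ + 1/r₂ = 1/r₃ + 1/r₄ = 1/r. Then there exists a constant C > 0 such that for all Schwartz functions g, h : ℝ³ → ℝ the commutator satisfies ‖∇^k(gh) − g · ∇^k h‖_{L^r} ≤ C ‖∇g‖_{L^{r₁}} ‖∇^{k−1} h‖_{L^{r₂}} + C ‖h‖_{L^{r₃}} ‖∇^k g‖_{L^{r₄}}. -/

import Mathlib

open MeasureTheory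
open scoped NNReal ENNReal

namespace CommLeib

open Set Metric

set_option linter.unusedSectionVars false

variable {E3 : Type} [NormedAddCommGroup E3] [NormedSpace ℝ E3] [FiniteDimensional ℝ E3]
  [MeasureSpace E3] [BorelSpace E3] [(volume : Measure E3).IsAddHaarMeasure]
  [Fact (Module.finrank ℝ E3 = 3)]

/-- Average over a ball. -/
noncomputable def avg (u : E3 → ℝ≥0∞) (c : E3) (ρ : ℝ) : ℝ≥0∞ :=
  (volume (ball c ρ))⁻¹ * ∫⁻ y in ball c ρ, u y

/-- The uncentered Hardy-Littlewood maximal function. -/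
noncomputable def MF (u : E3 → ℝ≥0∞) (x : E3) : ℝ≥0∞ :=
  ⨆ (c : E3) (ρ : ℝ) (_ : 0 < ρ) (_ : x ∈ ball c ρ), avg u c ρ

lemma avg_le_MF (u : E3 → ℝ≥0∞) {x c : E3} {ρ : ℝ} (hρ : 0 < ρ) (hx : x ∈ ball c ρ) :
    avg u c ρ ≤ MF u x := by
  unfold MF
  exact le_iSup_of_le c (le_iSup_of_le ρ (le_iSup_of_le hρ (le_iSup_of_le hx le_rfl)))

lemma lt_MF_iff {u : E3 → ℝ≥0∞} {x : E3} {l : ℝ≥0∞} :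
    l < MF u x ↔ ∃ (c : E3) (ρ : ℝ), 0 < ρ ∧ x ∈ ball c ρ ∧ l < avg u c ρ := by
  unfold MF
  simp only [lt_iSup_iff, exists_prop]

lemma isOpen_lt_MF (u : E3 → ℝ≥0∞) (l : ℝ≥0∞) : IsOpen {x | l < MF u x} := by
  have : {x | l < MF u x} = ⋃ (c : E3) (ρ : ℝ) (_ : 0 < ρ) (_ : l < avg u c ρ), ball c ρ := by
    ext x
    simp only [mem_ofPred_eq, lt_MF_iff, mem_iUnion, exists_prop]
    constructor
    · rintro ⟨c, ρ, h1, h2, h3⟩; exact ⟨c, ρ, h1, h3, h2⟩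
    · rintro ⟨c, ρ, h1, h2, h3⟩; exact ⟨c, ρ, h1, h3, h2⟩
  rw [this]
  exact isOpen_iUnion fun _ => isOpen_iUnion fun _ => isOpen_iUnion fun _ =>
    isOpen_iUnion fun _ => isOpen_ball

lemma measurable_MF (u : E3 → ℝ≥0∞) : Measurable (MF u) :=
  measurable_of_Ioi fun l => (isOpen_lt_MF u l).measurableSet

lemma vol_ball_pos (c : E3) {ρ : ℝ} (hρ : 0 < ρ) : volume (ball c ρ) ≠ 0 :=
  (measure_ball_pos volume c hρ).ne'

lemma vol_ball_ne_top (c : E3) (ρ : ℝ) : volume (ball c ρ) ≠ ⊤ := measure_ball_lt_top.ne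

lemma vol_ball_scale (c c' : E3) {s : ℝ} (hs : 0 < s) (ρ : ℝ) :
    volume (ball c (s * ρ)) = ENNReal.ofReal (s ^ 3) * volume (ball c' ρ) := by
  have h := Measure.addHaar_ball_mul_of_pos (volume : Measure E3) c hs ρ
  rw [Fact.out (p := Module.finrank ℝ E3 = 3)] at h
  rw [h, Measure.addHaar_ball_center volume c' ρ]

lemma lt_avg {u : E3 → ℝ≥0∞} {c : E3} {ρ : ℝ} (_ : 0 < ρ) {l : ℝ≥0∞} (h : l < avg u c ρ) :
    l * volume (ball c ρ) ≤ ∫⁻ y in ball c ρ, u y := by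
  unfold avg at h
  rw [mul_comm, ← div_eq_mul_inv] at h
  exact ENNReal.mul_le_of_le_div h.le

lemma avg_mono {u v : E3 → ℝ≥0∞} (h : ∀ x, u x ≤ v x) (c : E3) (ρ : ℝ) :
    avg u c ρ ≤ avg v c ρ := by
  unfold avg
  gcongr
  exact h _

lemma weak_type (u : E3 → ℝ≥0∞) (l : ℝ≥0∞) (hl : l ≠ 0) :
    l * volume {x | l < MF u x} ≤ 64 * ∫⁻ y, u y := by
  by_cases hu : ∫⁻ y, u y = ⊤
  · rw [hu, ENNReal.mul_top (by norm_num)]; exact le_top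
  by_cases hlt : l = ⊤
  · have : {x | l < MF u x} = ∅ := by ext x; simp [hlt]
    rw [this]; simp
  let t : Set (E3 × ℝ) := {a | 0 < a.2 ∧ l < avg u a.1 a.2}
  let K : ℝ≥0∞ := (∫⁻ y, u y) / (l * volume (ball (0 : E3) 1))
  have hK : K ≠ ⊤ :=
    ENNReal.div_ne_top hu (mul_ne_zero hl (vol_ball_pos 0 one_pos))
  have hR : ∀ a ∈ t, a.2 ≤ 1 + K.toReal := by
    rintro ⟨c, ρ⟩ ⟨h1, h2⟩
    simp only at h1 h2 ⊢
    have h3 := (lt_avg h1 h2).trans (setLIntegral_le_lintegral _ _)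
    have h4 := vol_ball_scale c 0 h1 1
    rw [mul_one] at h4
    rw [h4] at h3
    have h5 : ENNReal.ofReal (ρ ^ 3) ≤ K := by
      rw [ENNReal.le_div_iff_mul_le
        (Or.inl (mul_ne_zero hl (vol_ball_pos 0 one_pos)))
        (Or.inl (ENNReal.mul_ne_top hlt (vol_ball_ne_top 0 1)))]
      calc _ = _ := by ring
        _ ≤ _ := h3
    have h6 := (ENNReal.ofReal_le_iff_le_toReal hK).1 h5
    by_contra! hc
    have hK0 : 0 ≤ K.toReal := ENNReal.toReal_nonneg
    nlinarith [mul_pos h1 h1, mul_pos h1 (by linarith : 0 < ρ - 1)]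
  obtain ⟨w, hwt, hwd, hwc⟩ := Vitali.exists_disjoint_subfamily_covering_enlargement_ball t
    (fun a => a.1) (fun a => a.2) (1 + K.toReal) hR 4 (by norm_num)
  have hcount : w.Countable := by
    refine hwd.countable_of_isOpen (fun _ _ => isOpen_ball) ?_
    intro a ha
    exact ⟨a.1, mem_ball_self (hwt ha).1⟩
  have hsub : {x | l < MF u x} ⊆ ⋃ a ∈ w, ball a.1 (4 * a.2) := by
    intro x hx
    obtain ⟨c, ρ, h1, h2, h3⟩ := lt_MF_iff.1 hx
    obtain ⟨b, hb, hb'⟩ := hwc (c, ρ) ⟨h1, h3⟩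
    exact mem_biUnion hb (hb' h2)
  have : Countable w := hcount.to_subtype
  calc l * volume {x | l < MF u x}
      ≤ l * ∑' a : w, volume (ball a.1.1 (4 * a.1.2)) := by
        gcongr
        exact (measure_mono hsub).trans (measure_biUnion_le volume hcount _)
    _ = ∑' a : w, 64 * (l * volume (ball a.1.1 a.1.2)) := by
        rw [← ENNReal.tsum_mul_left]
        congr 1; ext a
        rw [vol_ball_scale a.1.1 a.1.1 (by norm_num : (0 : ℝ) < 4)]
        have : ENNReal.ofReal (4 ^ 3) = 64 := by
          rw [show (4 : ℝ) ^ 3 = ((64 : ℕ) : ℝ) by norm_num, ENNReal.ofReal_natCast]; norm_num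
        rw [this]; ring
    _ ≤ ∑' a : w, 64 * ∫⁻ y in ball a.1.1 a.1.2, u y := by
        gcongr with a
        exact lt_avg (hwt a.2).1 (hwt a.2).2
    _ = 64 * ∫⁻ y in ⋃ a ∈ w, ball a.1 a.2, u y := by
        rw [ENNReal.tsum_mul_left, lintegral_biUnion hcount (fun _ _ => measurableSet_ball) hwd]
    _ ≤ _ := by gcongr; exact Measure.restrict_le_self

/-- weak type estimate with truncation -/
lemma weak_type_trunc {u : E3 → ℝ≥0∞} (hu : Measurable u) (l : ℝ≥0∞) (hl : l ≠ 0) :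
    l * volume {x | 2 * l < MF u x} ≤ 64 * ∫⁻ y in {y | l < u y}, u y := by
  have hms : MeasurableSet {y | l < u y} := measurableSet_lt measurable_const hu
  rw [← lintegral_indicator hms]
  refine le_trans ?_ (weak_type _ l hl)
  refine mul_le_mul' le_rfl (measure_mono fun x hx => ?_)
  obtain ⟨c, ρ, h1, h2, h3⟩ := lt_MF_iff.1 hx
  refine lt_MF_iff.2 ⟨c, ρ, h1, h2, ?_⟩
  by_contra! hc
  refine absurd h3 (not_lt.2 ?_)
  have : avg u c ρ ≤ avg ({y | l < u y}.indicator u) c ρ + avg (fun _ => l) c ρ := by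
    unfold avg
    rw [← mul_add]
    gcongr
    rw [← lintegral_add_right _ measurable_const]
    refine lintegral_mono fun y => ?_
    by_cases hy : l < u y
    · rw [indicator_of_mem (show y ∈ {y | l < u y} from hy)]; exact le_self_add
    · rw [indicator_of_notMem (show y ∉ {y | l < u y} from hy), zero_add]; exact not_lt.1 hy
  refine this.trans ?_
  rw [two_mul]
  gcongr
  unfold avg
  rw [setLIntegral_const, mul_comm l, ← mul_assoc,
    ENNReal.inv_mul_cancel (vol_ball_pos c h1) (vol_ball_ne_top c ρ), one_mul]

lemma MF_le_of_le {u : E3 → ℝ≥0∞} {B : ℝ≥0∞} (h : ∀ x, u x ≤ B) (x : E3) : MF u x ≤ B := by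
  unfold MF
  refine iSup_le fun c => iSup_le fun ρ => iSup_le fun h1 => iSup_le fun _ => ?_
  refine (avg_mono h c ρ).trans ?_
  unfold avg
  rw [setLIntegral_const, mul_comm B, ← mul_assoc,
    ENNReal.inv_mul_cancel (vol_ball_pos c h1) (vol_ball_ne_top c ρ), one_mul]

lemma strong_type (p : ℝ) (hp : 1 < p) : ∃ C : ℝ≥0, ∀ v : E3 → ℝ, Measurable v → (∀ x, 0 ≤ v x) →
    ∀ B : ℝ, (∀ x, v x ≤ B) →
    ∫⁻ x, (MF (fun y => ENNReal.ofReal (v y)) x) ^ p ≤ C * ∫⁻ x, ENNReal.ofReal (v x) ^ p := by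
  refine ⟨Real.toNNReal (p * 128 * (2 ^ (p - 1) / (p - 1))), ?_⟩
  intro v hv hv0 B hB
  set u : E3 → ℝ≥0∞ := fun y => ENNReal.ofReal (v y) with hu
  have hum : Measurable u := hv.ennreal_ofReal
  have hMle : ∀ x, MF u x ≤ ENNReal.ofReal B :=
    MF_le_of_le fun x => ENNReal.ofReal_le_ofReal (hB x)
  have hMt : ∀ x, MF u x ≠ ⊤ := fun x => ((hMle x).trans_lt ENNReal.ofReal_lt_top).ne
  have hmm : Measurable fun x => (MF u x).toReal := (measurable_MF u).ennreal_toReal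
  have key := lintegral_rpow_eq_lintegral_meas_lt_mul (μ := (volume : Measure E3))
    (f := fun x => (MF u x).toReal) (Filter.Eventually.of_forall fun x => ENNReal.toReal_nonneg)
    hmm.aemeasurable (p := p) (by linarith)
  have e1 : ∀ x, ENNReal.ofReal ((MF u x).toReal ^ p) = MF u x ^ p := by
    intro x
    rw [← ENNReal.ofReal_rpow_of_nonneg ENNReal.toReal_nonneg (by linarith),
      ENNReal.ofReal_toReal (hMt x)]
  simp only [e1] at key
  rw [key]
  have e2 : ∀ t ∈ Ioi (0 : ℝ), volume {a : E3 | t < (MF u a).toReal} * ENNReal.ofReal (t ^ (p - 1))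
      ≤ ∫⁻ y, (Ioi t).indicator (fun _ => (128 : ℝ≥0∞)) (2 * v y) *
        (ENNReal.ofReal (v y) * ENNReal.ofReal (t ^ (p - 2))) := by
    intro t ht
    have ht : 0 < t := ht
    have hset : {a : E3 | t < (MF u a).toReal} = {a | 2 * ENNReal.ofReal (t / 2) < MF u a} := by
      ext a
      simp only [mem_ofPred_eq]
      rw [show (2 : ℝ≥0∞) = ENNReal.ofReal 2 by simp, ← ENNReal.ofReal_mul (by norm_num),
        ENNReal.ofReal_lt_iff_lt_toReal (by positivity) (hMt a)]
      rw [show 2 * (t / 2) = t by ring]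
    have hset2 : {y | ENNReal.ofReal (t / 2) < u y} = {y | t < 2 * v y} := by
      ext y
      simp only [mem_ofPred_eq, hu]
      rw [ENNReal.ofReal_lt_ofReal_iff_of_nonneg (by positivity)]
      constructor <;> intro h <;> linarith
    have h1 := weak_type_trunc hum (ENNReal.ofReal (t / 2))
      (by simp; linarith)
    rw [← hset, hset2] at h1
    have hms : MeasurableSet {y | t < 2 * v y} :=
      measurableSet_lt measurable_const (hv.const_mul 2)
    have e3 : ENNReal.ofReal (t ^ (p - 1)) =
        ENNReal.ofReal (t / 2) * (2 * ENNReal.ofReal (t ^ (p - 2))) := by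
      rw [show (2 : ℝ≥0∞) = ENNReal.ofReal 2 by simp, ← ENNReal.ofReal_mul (by norm_num),
        ← ENNReal.ofReal_mul (by positivity)]
      congr 1
      rw [show p - 1 = (p - 2) + 1 by ring, Real.rpow_add_one ht.ne']; ring
    calc volume {a : E3 | t < (MF u a).toReal} * ENNReal.ofReal (t ^ (p - 1))
        = (ENNReal.ofReal (t / 2) * volume {a : E3 | t < (MF u a).toReal}) *
          (2 * ENNReal.ofReal (t ^ (p - 2))) := by rw [e3]; ring
      _ ≤ (64 * ∫⁻ y in {y | t < 2 * v y}, u y) * (2 * ENNReal.ofReal (t ^ (p - 2))) := by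
          gcongr
      _ = ∫⁻ y in {y | t < 2 * v y}, 128 * (u y * ENNReal.ofReal (t ^ (p - 2))) := by
          rw [lintegral_const_mul _ (hum.mul_const _), lintegral_mul_const _ hum]; ring
      _ = _ := by
          rw [← lintegral_indicator hms]
          refine lintegral_congr fun y => ?_
          by_cases hy : t < 2 * v y
          · rw [indicator_of_mem (show y ∈ {y | t < 2 * v y} from hy),
              indicator_of_mem (show 2 * v y ∈ Ioi t from hy)]
          · rw [indicator_of_notMem (show y ∉ {y | t < 2 * v y} from hy),
              indicator_of_notMem (show 2 * v y ∉ Ioi t from hy), zero_mul]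
  have hp1 : 0 < p - 1 := by linarith
  have e4 : ∀ y, ∫⁻ t in Ioi (0 : ℝ), (Ioi t).indicator (fun _ => (128 : ℝ≥0∞)) (2 * v y) *
        (ENNReal.ofReal (v y) * ENNReal.ofReal (t ^ (p - 2))) =
        ENNReal.ofReal (128 * (2 ^ (p - 1) / (p - 1))) * u y ^ p := by
    intro y
    have hvy := hv0 y
    have : ∀ t ∈ Ioi (0 : ℝ), (Ioi t).indicator (fun _ => (128 : ℝ≥0∞)) (2 * v y) *
        (ENNReal.ofReal (v y) * ENNReal.ofReal (t ^ (p - 2))) =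
        (Iio (2 * v y)).indicator
          (fun t => ENNReal.ofReal (128 * v y) * ENNReal.ofReal (t ^ (p - 2))) t := by
      intro t _
      by_cases hy : t < 2 * v y
      · rw [indicator_of_mem (show t ∈ Iio (2 * v y) from hy),
          indicator_of_mem (show 2 * v y ∈ Ioi t from hy), ENNReal.ofReal_mul (by norm_num)]
        simp [mul_assoc]
      · rw [indicator_of_notMem (show t ∉ Iio (2 * v y) from hy),
          indicator_of_notMem (show 2 * v y ∉ Ioi t from hy), zero_mul]
    rw [setLIntegral_congr_fun measurableSet_Ioi this, lintegral_indicator measurableSet_Iio,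
      Measure.restrict_restrict measurableSet_Iio, Set.inter_comm, Ioi_inter_Iio,
      lintegral_const_mul _ (by fun_prop)]
    have hint : ∫⁻ t in Ioo 0 (2 * v y), ENNReal.ofReal (t ^ (p - 2)) =
        ENNReal.ofReal ((2 * v y) ^ (p - 1) / (p - 1)) := by
      rw [← setLIntegral_congr (Ioo_ae_eq_Ioc (μ := volume)).symm]
      rw [← ofReal_integral_eq_lintegral_ofReal]
      · rw [← intervalIntegral.integral_of_le (by positivity), integral_rpow (Or.inl (by linarith)),
          Real.zero_rpow (by linarith)]
        congr 1
        rw [show p - 2 + 1 = p - 1 by ring, sub_zero]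
      · have := intervalIntegral.intervalIntegrable_rpow' (a := 0) (b := 2 * v y)
          (r := p - 2) (by linarith)
        exact (intervalIntegrable_iff_integrableOn_Ioc_of_le (by positivity)).1 this
      · refine (ae_restrict_iff' measurableSet_Ioc).2 (Filter.Eventually.of_forall fun t ht => ?_)
        exact Real.rpow_nonneg ht.1.le _
    rw [hint, hu]
    simp only
    rw [ENNReal.ofReal_rpow_of_nonneg hvy (by linarith), ← ENNReal.ofReal_mul (by positivity),
      ← ENNReal.ofReal_mul (by positivity)]
    congr 1
    rw [Real.mul_rpow (by norm_num) hvy]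
    have : v y ^ p = v y * v y ^ (p - 1) := by
      rcases hvy.eq_or_lt with h | h
      · rw [← h, Real.zero_rpow (by linarith)]; simp
      · nth_rewrite 2 [← Real.rpow_one (v y)]
        rw [← Real.rpow_add h]; congr 1; ring
    rw [this]; ring
  have hjoint : Measurable (Function.uncurry fun (t : ℝ) (y : E3) =>
      (Ioi t).indicator (fun _ => (128 : ℝ≥0∞)) (2 * v y) *
        (ENNReal.ofReal (v y) * ENNReal.ofReal (t ^ (p - 2)))) := by
    have : (Function.uncurry fun (t : ℝ) (y : E3) =>
      (Ioi t).indicator (fun _ => (128 : ℝ≥0∞)) (2 * v y) *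
        (ENNReal.ofReal (v y) * ENNReal.ofReal (t ^ (p - 2)))) = fun q : ℝ × E3 =>
        {q : ℝ × E3 | q.1 < 2 * v q.2}.indicator (fun _ => (128 : ℝ≥0∞)) q *
        (ENNReal.ofReal (v q.2) * ENNReal.ofReal (q.1 ^ (p - 2))) := by
      ext ⟨t, y⟩
      simp [Function.uncurry, indicator]
    rw [this]
    have hs : MeasurableSet {q : ℝ × E3 | q.1 < 2 * v q.2} :=
      measurableSet_lt measurable_fst ((hv.comp measurable_snd).const_mul 2)
    exact ((measurable_const.indicator hs)).mul
      (((hv.comp measurable_snd).ennreal_ofReal).mul (by fun_prop))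
  calc ENNReal.ofReal p * ∫⁻ t in Ioi (0 : ℝ), volume {a : E3 | t < (MF u a).toReal} *
        ENNReal.ofReal (t ^ (p - 1))
      ≤ ENNReal.ofReal p * ∫⁻ t in Ioi (0 : ℝ), ∫⁻ y,
        (Ioi t).indicator (fun _ => (128 : ℝ≥0∞)) (2 * v y) *
        (ENNReal.ofReal (v y) * ENNReal.ofReal (t ^ (p - 2))) := by
        gcongr 1
        exact setLIntegral_mono' measurableSet_Ioi e2
    _ = ENNReal.ofReal p * ∫⁻ y, ENNReal.ofReal (128 * (2 ^ (p - 1) / (p - 1))) * u y ^ p := by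
        rw [lintegral_lintegral_swap hjoint.aemeasurable]
        simp only [e4]
    _ ≤ _ := by
        rw [lintegral_const_mul _ (hum.pow_const p), ← mul_assoc,
          ← ENNReal.ofReal_mul (by linarith), ← mul_assoc]
        rfl

variable {F : Type*} [NormedAddCommGroup F] [NormedSpace ℝ F]

lemma measurable_enorm_of_cont {X G : Type*} [TopologicalSpace X] [MeasurableSpace X]
    [OpensMeasurableSpace X] [SeminormedAddCommGroup G] {g : X → G} (hg : Continuous g) :
    Measurable fun y => ‖g y‖ₑ := hg.enorm.measurable

/-- first order Taylor remainder -/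
noncomputable def Rem (f : E3 → F) (x z : E3) : F := f (x + z) - f x - fderiv ℝ f x z

lemma rem_le [CompleteSpace F] {f : E3 → F} (hf : ContDiff ℝ 2 f) (x z : E3) :
    ‖Rem f x z‖ₑ ≤ ∫⁻ s in Ioc (0 : ℝ) 1, ‖z‖ₑ ^ 2 * ‖fderiv ℝ (fderiv ℝ f) (x + s • z)‖ₑ := by
  have hf1 : Differentiable ℝ f := hf.differentiable (by norm_num)
  have hdf : ContDiff ℝ 1 (fderiv ℝ f) := hf.fderiv_right (by norm_num)
  have hdf1 : Differentiable ℝ (fderiv ℝ f) := hdf.differentiable (by norm_num)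
  have hddf : Continuous (fderiv ℝ (fderiv ℝ f)) := hdf.continuous_fderiv (by norm_num)
  have hline : ∀ s : ℝ, HasDerivAt (fun s : ℝ => x + s • z) z s := by
    intro s
    simpa using ((hasDerivAt_id s).smul_const z).const_add x
  have h1 : ∀ s : ℝ, HasDerivAt (fun s : ℝ => f (x + s • z)) (fderiv ℝ f (x + s • z) z) s :=
    fun s => (hf1 _).hasFDerivAt.comp_hasDerivAt s (hline s)
  have h2 : ∀ s : ℝ, HasDerivAt (fun s : ℝ => fderiv ℝ f (x + s • z) z)
      (fderiv ℝ (fderiv ℝ f) (x + s • z) z z) s := by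
    intro s
    have := (hdf1 (x + s • z)).hasFDerivAt.comp_hasDerivAt s (hline s)
    simpa using this.clm_apply (hasDerivAt_const s z)
  have h3 : ∀ s : ℝ, HasDerivAt (fun s : ℝ => f (x + s • z) + (1 - s) • fderiv ℝ f (x + s • z) z)
      ((1 - s) • fderiv ℝ (fderiv ℝ f) (x + s • z) z z) s := by
    intro s
    have h4 : HasDerivAt (fun s : ℝ => 1 - s) (-1) s := by
      simpa using (hasDerivAt_id s).const_sub 1
    have := (h1 s).add (h4.smul (h2 s))
    refine this.congr_deriv ?_
    rw [neg_one_smul]; abel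
  have hcont : Continuous fun s : ℝ => (1 - s) • fderiv ℝ (fderiv ℝ f) (x + s • z) z z := by
    fun_prop
  have h5 := intervalIntegral.integral_eq_sub_of_hasDerivAt (a := 0) (b := 1)
    (fun s _ => h3 s) (hcont.intervalIntegrable 0 1)
  have h6 : Rem f x z = ∫ s in (0 : ℝ)..1, (1 - s) • fderiv ℝ (fderiv ℝ f) (x + s • z) z z := by
    rw [h5, Rem]; simp [sub_sub]
  rw [h6, intervalIntegral.integral_of_le zero_le_one]
  refine (enorm_integral_le_lintegral_enorm _).trans ?_
  refine setLIntegral_mono' measurableSet_Ioc fun s hs => ?_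
  have hn : ‖(1 - s) • fderiv ℝ (fderiv ℝ f) (x + s • z) z z‖ ≤
      ‖z‖ ^ 2 * ‖fderiv ℝ (fderiv ℝ f) (x + s • z)‖ := by
    rw [norm_smul]
    have a1 : ‖1 - s‖ ≤ 1 := by
      rw [Real.norm_eq_abs, abs_le]; constructor <;> linarith [hs.1, hs.2]
    have a2 := (fderiv ℝ (fderiv ℝ f) (x + s • z)).le_opNorm₂ z z
    calc _ ≤ 1 * (‖fderiv ℝ (fderiv ℝ f) (x + s • z)‖ * ‖z‖ * ‖z‖) := by gcongr
      _ = _ := by ring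
  rw [← ofReal_norm, ← ofReal_norm, ← ofReal_norm, ← ENNReal.ofReal_pow (norm_nonneg _),
    ← ENNReal.ofReal_mul (by positivity)]
  exact ENNReal.ofReal_le_ofReal hn

lemma scaled_ball {w : E3 → ℝ≥0∞} (hw : Measurable w) (x : E3) {ρ s : ℝ} (hρ : 0 < ρ) (hs : 0 < s) :
    ∫⁻ z in ball (0 : E3) ρ, w (x + s • z) ≤ volume (ball (0 : E3) ρ) * MF w x := by
  have hsρ : 0 < s * ρ := mul_pos hs hρ
  have h1 : ∫⁻ z in ball (0 : E3) ρ, w (x + s • z) =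
      ENNReal.ofReal ((s ^ 3)⁻¹) * ∫⁻ y in ball x (s * ρ), w y := by
    rw [← lintegral_indicator measurableSet_ball, ← lintegral_indicator measurableSet_ball]
    rw [← lintegral_add_left_eq_self ((ball x (s * ρ)).indicator w) x]
    have hmap := Measure.map_addHaar_smul (volume : Measure E3) hs.ne'
    rw [Fact.out (p := Module.finrank ℝ E3 = 3), abs_of_pos (by positivity)] at hmap
    have hmeas : Measurable fun a => (ball x (s * ρ)).indicator w (x + a) :=
      (hw.indicator measurableSet_ball).comp (measurable_const_add x)
    rw [← smul_eq_mul, ← lintegral_smul_measure, ← hmap,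
      lintegral_map hmeas (measurable_const_smul s)]
    refine lintegral_congr fun z => ?_
    have : (z ∈ ball (0 : E3) ρ) ↔ (x + s • z ∈ ball x (s * ρ)) := by
      rw [mem_ball_zero_iff, mem_ball, dist_eq_norm, add_sub_cancel_left, norm_smul,
        Real.norm_of_nonneg hs.le, mul_lt_mul_iff_right₀ hs]
    by_cases hz : z ∈ ball (0 : E3) ρ
    · rw [indicator_of_mem hz, indicator_of_mem (this.1 hz)]
    · rw [indicator_of_notMem hz, indicator_of_notMem (fun h => hz (this.2 h))]
  have h2 : ∫⁻ y in ball x (s * ρ), w y = volume (ball x (s * ρ)) * avg w x (s * ρ) := by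
    unfold avg
    rw [← mul_assoc, ENNReal.mul_inv_cancel (vol_ball_pos x hsρ) (vol_ball_ne_top _ _), one_mul]
  rw [h1, h2, vol_ball_scale x 0 hs, ← mul_assoc, ← mul_assoc, ← ENNReal.ofReal_mul (by positivity),
    inv_mul_cancel₀ (by positivity), ENNReal.ofReal_one, one_mul]
  gcongr
  exact avg_le_MF w hsρ (mem_ball_self hsρ)

lemma rem_avg [CompleteSpace F] {f : E3 → F} (hf : ContDiff ℝ 2 f) (x : E3) {ρ : ℝ} (hρ : 0 < ρ) :
    ∫⁻ z in ball (0 : E3) ρ, ‖Rem f x z‖ₑ ≤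
      ENNReal.ofReal (ρ ^ 2) * (volume (ball (0 : E3) ρ) *
        MF (fun y => ‖fderiv ℝ (fderiv ℝ f) y‖ₑ) x) := by
  have hdf : ContDiff ℝ 1 (fderiv ℝ f) := hf.fderiv_right (by norm_num)
  have hddf : Continuous (fderiv ℝ (fderiv ℝ f)) := hdf.continuous_fderiv (by norm_num)
  have hw : Measurable fun y => ‖fderiv ℝ (fderiv ℝ f) y‖ₑ := measurable_enorm_of_cont hddf
  have hj : Measurable (Function.uncurry fun (z : E3) (s : ℝ) =>
      ENNReal.ofReal (ρ ^ 2) * ‖fderiv ℝ (fderiv ℝ f) (x + s • z)‖ₑ) := by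
    refine Measurable.const_mul ?_ _
    have hc : Continuous fun q : E3 × ℝ => fderiv ℝ (fderiv ℝ f) (x + q.2 • q.1) :=
      hddf.comp (by fun_prop)
    exact measurable_enorm_of_cont hc
  calc ∫⁻ z in ball (0 : E3) ρ, ‖Rem f x z‖ₑ
      ≤ ∫⁻ z in ball (0 : E3) ρ, ∫⁻ s in Ioc (0 : ℝ) 1,
        ENNReal.ofReal (ρ ^ 2) * ‖fderiv ℝ (fderiv ℝ f) (x + s • z)‖ₑ := by
        refine setLIntegral_mono' measurableSet_ball fun z hz => ?_
        refine (rem_le hf x z).trans ?_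
        gcongr with s
        rw [← ofReal_norm, ← ENNReal.ofReal_pow (norm_nonneg _)]
        refine ENNReal.ofReal_le_ofReal ?_
        have := (mem_ball_zero_iff.1 hz).le
        gcongr
    _ = ∫⁻ s in Ioc (0 : ℝ) 1, ∫⁻ z in ball (0 : E3) ρ,
        ENNReal.ofReal (ρ ^ 2) * ‖fderiv ℝ (fderiv ℝ f) (x + s • z)‖ₑ := by
        rw [lintegral_lintegral_swap hj.aemeasurable]
    _ ≤ ∫⁻ s in Ioc (0 : ℝ) 1, ENNReal.ofReal (ρ ^ 2) * (volume (ball (0 : E3) ρ) *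
        MF (fun y => ‖fderiv ℝ (fderiv ℝ f) y‖ₑ) x) := by
        refine setLIntegral_mono' measurableSet_Ioc fun s hs => ?_
        have hc : Measurable fun z : E3 => x + s • z := Continuous.measurable (by fun_prop)
        rw [lintegral_const_mul (f := fun z => ‖fderiv ℝ (fderiv ℝ f) (x + s • z)‖ₑ) _ (hw.comp hc)]
        gcongr
        exact scaled_ball hw x hρ hs.1
    _ = _ := by rw [setLIntegral_const]; simp

lemma pointwise1 [CompleteSpace F] {f : E3 → F} (hf : ContDiff ℝ 2 f) (x v : E3) (hv : ‖v‖ = 1)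
    {t : ℝ} (ht : 0 < t) :
    ENNReal.ofReal t * ‖fderiv ℝ f x v‖ₑ ≤ 16 * (MF (fun y => ‖f y‖ₑ) x +
      ENNReal.ofReal (4 * t ^ 2) * MF (fun y => ‖fderiv ℝ (fderiv ℝ f) y‖ₑ) x) := by
  set G : E3 → ℝ≥0∞ := fun z => ‖f (x + z)‖ₑ + ‖Rem f x z‖ₑ with hG
  have hfc : Continuous f := hf.continuous
  have hfx : Continuous fun z => fderiv ℝ f x z := (fderiv ℝ f x).continuous
  have hRc : Continuous (Rem f x) := by unfold Rem; fun_prop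
  have hGm : Measurable G := by
    have hc : Continuous fun z => f (x + z) := hfc.comp (by fun_prop)
    exact (measurable_enorm_of_cont hc).add (measurable_enorm_of_cont hRc)
  have h1 : ∀ y, ENNReal.ofReal t * ‖fderiv ℝ f x v‖ₑ ≤ G (y + t • v) + G y := by
    intro y
    have : t • fderiv ℝ f x v = (f (x + (y + t • v)) - Rem f x (y + t • v)) -
        (f (x + y) - Rem f x y) := by
      unfold Rem; rw [map_add, map_smul]; abel
    have h2 : ENNReal.ofReal t * ‖fderiv ℝ f x v‖ₑ = ‖t • fderiv ℝ f x v‖ₑ := by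
      rw [enorm_smul, Real.enorm_eq_ofReal ht.le]
    rw [h2, this]
    exact (enorm_sub_le).trans (add_le_add enorm_sub_le enorm_sub_le)
  have h2t : 0 < 2 * t := by linarith
  have hGint : ∫⁻ z in ball (0 : E3) (2 * t), G z ≤ volume (ball (0 : E3) (2 * t)) *
      (MF (fun y => ‖f y‖ₑ) x +
      ENNReal.ofReal (4 * t ^ 2) * MF (fun y => ‖fderiv ℝ (fderiv ℝ f) y‖ₑ) x) := by
    rw [hG, lintegral_add_right _ (measurable_enorm_of_cont hRc), mul_add]
    gcongr
    · simpa using scaled_ball (w := fun y => ‖f y‖ₑ) (measurable_enorm_of_cont hfc) x h2t one_pos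
    · refine (rem_avg hf x h2t).trans (le_of_eq ?_)
      rw [show (2 * t) ^ 2 = 4 * t ^ 2 by ring]; ring
  have hA : ∫⁻ y in ball (0 : E3) t, G (y + t • v) ≤ ∫⁻ z in ball (0 : E3) (2 * t), G z := by
    rw [← lintegral_indicator measurableSet_ball, ← lintegral_indicator measurableSet_ball,
      ← lintegral_add_right_eq_self ((ball (0 : E3) (2 * t)).indicator G) (t • v)]
    refine lintegral_mono fun y => ?_
    by_cases hy : y ∈ ball (0 : E3) t
    · have : y + t • v ∈ ball (0 : E3) (2 * t) := by
        rw [mem_ball_zero_iff] at hy ⊢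
        have := norm_add_le y (t • v)
        rw [norm_smul, hv, Real.norm_of_nonneg ht.le] at this
        linarith
      rw [indicator_of_mem hy, indicator_of_mem this]
    · rw [indicator_of_notMem hy]; exact zero_le
  have hB : ∫⁻ y in ball (0 : E3) t, G y ≤ ∫⁻ z in ball (0 : E3) (2 * t), G z :=
    lintegral_mono_set (ball_subset_ball (by linarith))
  have hC : volume (ball (0 : E3) t) * (ENNReal.ofReal t * ‖fderiv ℝ f x v‖ₑ) ≤
      volume (ball (0 : E3) t) * (16 * (MF (fun y => ‖f y‖ₑ) x +
      ENNReal.ofReal (4 * t ^ 2) * MF (fun y => ‖fderiv ℝ (fderiv ℝ f) y‖ₑ) x)) := by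
    calc volume (ball (0 : E3) t) * (ENNReal.ofReal t * ‖fderiv ℝ f x v‖ₑ)
        = ∫⁻ y in ball (0 : E3) t, ENNReal.ofReal t * ‖fderiv ℝ f x v‖ₑ := by
          rw [setLIntegral_const, mul_comm]
      _ ≤ ∫⁻ y in ball (0 : E3) t, (G (y + t • v) + G y) := lintegral_mono fun y => h1 y
      _ = (∫⁻ y in ball (0 : E3) t, G (y + t • v)) + ∫⁻ y in ball (0 : E3) t, G y :=
          lintegral_add_right _ hGm
      _ ≤ _ := add_le_add (hA.trans hGint) (hB.trans hGint)
      _ = _ := by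
          rw [vol_ball_scale 0 0 (by norm_num : (0 : ℝ) < 2) t]
          have : ENNReal.ofReal (2 ^ 3) = 8 := by
            rw [show (2 : ℝ) ^ 3 = ((8 : ℕ) : ℝ) by norm_num, ENNReal.ofReal_natCast]; norm_num
          rw [this]; ring
  exact (ENNReal.mul_le_mul_iff_right (vol_ball_pos 0 ht) (vol_ball_ne_top 0 t)).1 hC

lemma discr_aux {d a b : ℝ} (ha : 0 ≤ a) (hb : 0 ≤ b)
    (h : ∀ t : ℝ, 0 < t → t * d ≤ a + b * t ^ 2) (hd : 0 ≤ d) : d ^ 2 ≤ 4 * a * b := by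
  rcases hd.eq_or_lt with h0 | h0
  · rw [← h0, zero_pow two_ne_zero]; positivity
  rcases hb.eq_or_lt with hb0 | hb0
  · have := h ((a + 1) / d) (by positivity)
    rw [div_mul_cancel₀ _ h0.ne', ← hb0] at this
    linarith
  · have := h (d / (2 * b)) (by positivity)
    have e : d / (2 * b) * d = 2 * (d ^ 2 / (4 * b)) := by field_simp; ring
    have e2 : b * (d / (2 * b)) ^ 2 = d ^ 2 / (4 * b) := by field_simp; ring
    rw [e, e2] at this
    have h3 : d ^ 2 / (4 * b) ≤ a := by linarith
    rw [div_le_iff₀ (by positivity)] at h3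
    linarith

lemma pointwise2 [CompleteSpace F] {f : E3 → F} (hf : ContDiff ℝ 2 f) (x : E3)
    (h1 : MF (fun y => ‖f y‖ₑ) x ≠ ⊤)
    (h2 : MF (fun y => ‖fderiv ℝ (fderiv ℝ f) y‖ₑ) x ≠ ⊤) :
    ‖fderiv ℝ f x‖ ≤ 64 * (MF (fun y => ‖f y‖ₑ) x).toReal ^ (1 / 2 : ℝ) *
      (MF (fun y => ‖fderiv ℝ (fderiv ℝ f) y‖ₑ) x).toReal ^ (1 / 2 : ℝ) := by
  have key := fun v hv t (ht : 0 < t) => pointwise1 hf x v hv ht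
  lift MF (fun y => ‖f y‖ₑ) x to ℝ≥0 using h1 with A
  lift MF (fun y => ‖fderiv ℝ (fderiv ℝ f) y‖ₑ) x to ℝ≥0 using h2 with B
  have key2 : ∀ t : ℝ, 0 < t → t * ‖fderiv ℝ f x‖ ≤ 16 * A + 64 * B * t ^ 2 := by
    intro t ht
    rw [mul_comm, ← le_div_iff₀ ht]
    refine ContinuousLinearMap.opNorm_le_of_unit_norm (𝕜 := ℝ) (by positivity) fun v hv => ?_
    rw [le_div_iff₀ ht]
    have := key v hv t ht
    rw [← ofReal_norm, ← ENNReal.ofReal_mul ht.le] at this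
    have e : (16 : ℝ≥0∞) * (A + ENNReal.ofReal (4 * t ^ 2) * B) =
        ENNReal.ofReal (16 * A + 64 * B * t ^ 2) := by
      rw [← ENNReal.ofReal_coe_nnreal, ← ENNReal.ofReal_coe_nnreal (p := B),
        ← ENNReal.ofReal_mul (by positivity), ← ENNReal.ofReal_add (by positivity) (by positivity),
        show (16 : ℝ≥0∞) = ENNReal.ofReal 16 by simp, ← ENNReal.ofReal_mul (by positivity)]
      congr 1; ring
    rw [e, ENNReal.ofReal_le_ofReal_iff (by positivity)] at this
    linarith
  have := discr_aux (by positivity) (by positivity) key2 (norm_nonneg _)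
  simp only [ENNReal.coe_toReal, ← Real.sqrt_eq_rpow]
  refine (sq_le_sq₀ (norm_nonneg _) (by positivity)).1 ?_
  rw [mul_pow, mul_pow, Real.sq_sqrt A.coe_nonneg, Real.sq_sqrt B.coe_nonneg]
  linarith

/-- exponent with given reciprocal -/
noncomputable def P (a : ℝ) : ℝ≥0∞ := (ENNReal.ofReal a)⁻¹

lemma P_zero : P 0 = ⊤ := by simp [P]

lemma P_of_pos {a : ℝ} (ha : 0 < a) : P a = ENNReal.ofReal a⁻¹ := by
  rw [P, ENNReal.ofReal_inv_of_pos ha]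

lemma P_holder {a b : ℝ} (ha : 0 ≤ a) (hb : 0 ≤ b) : ENNReal.HolderTriple (P a) (P b) (P (a + b)) := by
  constructor
  simp only [P, inv_inv]
  rw [ENNReal.ofReal_add ha hb]

lemma P_half {a : ℝ} (ha : 0 ≤ a) : P (a / 2) * ENNReal.ofReal (1 / 2) = P a := by
  rcases ha.eq_or_lt with h | h
  · rw [← h, zero_div, P_zero, ENNReal.top_mul (by simp)]
  · rw [P_of_pos h, P_of_pos (by positivity), ← ENNReal.ofReal_mul (by positivity)]
    congr 1
    field_simp

lemma MF_le_of_ae_le {u : E3 → ℝ≥0∞} {B : ℝ≥0∞} (h : ∀ᵐ x, u x ≤ B) (x : E3) : MF u x ≤ B := by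
  unfold MF
  refine iSup_le fun c => iSup_le fun ρ => iSup_le fun h1 => iSup_le fun _ => ?_
  unfold avg
  calc _ ≤ (volume (ball c ρ))⁻¹ * ∫⁻ y in ball c ρ, B := by
        gcongr 1
        exact lintegral_mono_ae (ae_restrict_of_ae h)
    _ = B := by
      rw [setLIntegral_const, mul_comm B, ← mul_assoc,
        ENNReal.inv_mul_cancel (vol_ball_pos c h1) (vol_ball_ne_top c ρ), one_mul]

lemma MF_ne_top {G : Type*} [NormedAddCommGroup G] {f : E3 → G} {B : ℝ} (h : ∀ x, ‖f x‖ ≤ B)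
    (x : E3) : MF (fun y => ‖f y‖ₑ) x ≠ ⊤ := by
  refine ((MF_le_of_le (B := ENNReal.ofReal B) (fun y => ?_) x).trans_lt ENNReal.ofReal_lt_top).ne
  rw [← ofReal_norm]
  exact ENNReal.ofReal_le_ofReal (h y)

lemma eLpNorm_MF (a : ℝ) (ha : 0 ≤ a) (ha1 : a < 1) (G : Type*) [NormedAddCommGroup G] :
    ∃ C : ℝ≥0, ∀ f : E3 → G, Continuous f → ∀ B : ℝ, (∀ x, ‖f x‖ ≤ B) →
      eLpNorm (fun x => (MF (fun y => ‖f y‖ₑ) x).toReal) (P a) volume ≤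
        C * eLpNorm f (P a) volume := by
  rcases ha.eq_or_lt with h | h
  · refine ⟨1, fun f hf B hB => ?_⟩
    rw [← h, P_zero, eLpNorm_exponent_top, eLpNorm_exponent_top, ENNReal.coe_one, one_mul]
    refine essSup_le_of_ae_le _ (Filter.Eventually.of_forall fun x => ?_)
    simp only
    rw [Real.enorm_eq_ofReal ENNReal.toReal_nonneg, ENNReal.ofReal_toReal (MF_ne_top hB x)]
    exact MF_le_of_ae_le (enorm_ae_le_eLpNormEssSup f volume) x
  · have hp : 1 < a⁻¹ := (one_lt_inv₀ h).2 ha1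
    obtain ⟨C, hC⟩ := strong_type (E3 := E3) a⁻¹ hp
    refine ⟨C ^ a, fun f hf B hB => ?_⟩
    have e := hC (fun x => ‖f x‖) hf.norm.measurable (fun x => norm_nonneg _) B hB
    simp only [ofReal_norm] at e
    rw [P_of_pos h, eLpNorm_eq_lintegral_rpow_enorm_toReal (by simp [h]) (by simp),
      eLpNorm_eq_lintegral_rpow_enorm_toReal (by simp [h]) (by simp),
      ENNReal.toReal_ofReal (by positivity), one_div, inv_inv]
    have e2 : ∀ x, ‖(MF (fun y => ‖f y‖ₑ) x).toReal‖ₑ = MF (fun y => ‖f y‖ₑ) x := fun x => by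
      rw [Real.enorm_eq_ofReal ENNReal.toReal_nonneg, ENNReal.ofReal_toReal (MF_ne_top hB x)]
    simp only [e2]
    rw [ENNReal.coe_rpow_of_nonneg _ ha, ← ENNReal.mul_rpow_of_nonneg _ _ ha]
    gcongr

lemma bdd_fderiv2 {F : Type*} [NormedAddCommGroup F] [NormedSpace ℝ F] (f : SchwartzMap E3 F) :
    Continuous (fderiv ℝ (fderiv ℝ f)) ∧ ∃ B : ℝ, ∀ x, ‖fderiv ℝ (fderiv ℝ f) x‖ ≤ B := by
  let f2 : SchwartzMap E3 (E3 →L[ℝ] E3 →L[ℝ] F) :=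
    SchwartzMap.fderivCLM ℝ E3 (E3 →L[ℝ] F) (SchwartzMap.fderivCLM ℝ E3 F f)
  have hf2 : ⇑f2 = fderiv ℝ (fderiv ℝ f) := by
    ext1 x
    rfl
  refine ⟨hf2 ▸ f2.continuous, SchwartzMap.seminorm ℝ 0 0 f2, fun x => ?_⟩
  rw [← hf2]; exact SchwartzMap.norm_le_seminorm ℝ f2 x

lemma step (a b : ℝ) (ha : 0 ≤ a) (ha1 : a < 1) (hb : 0 ≤ b) (hb1 : b < 1)
    (F : Type*) [NormedAddCommGroup F] [NormedSpace ℝ F] [CompleteSpace F] :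
    ∃ C : ℝ≥0, ∀ f : SchwartzMap E3 F,
      eLpNorm (fderiv ℝ f) (P ((a + b) / 2)) volume ≤
        C * eLpNorm f (P a) volume ^ (1 / 2 : ℝ) *
          eLpNorm (fderiv ℝ (fderiv ℝ f)) (P b) volume ^ (1 / 2 : ℝ) := by
  obtain ⟨C1, h1⟩ := eLpNorm_MF (E3 := E3) a ha ha1 F
  obtain ⟨C2, h2⟩ := eLpNorm_MF (E3 := E3) b hb hb1 (E3 →L[ℝ] E3 →L[ℝ] F)
  refine ⟨64 * C1 ^ (1 / 2 : ℝ) * C2 ^ (1 / 2 : ℝ), fun f => ?_⟩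
  obtain ⟨hc2, B2, hB2⟩ : Continuous (fderiv ℝ (fderiv ℝ f)) ∧
      ∃ B : ℝ, ∀ x, ‖fderiv ℝ (fderiv ℝ f) x‖ ≤ B := bdd_fderiv2 f
  obtain ⟨B1, hB1⟩ : ∃ B : ℝ, ∀ x, ‖f x‖ ≤ B := ⟨_, fun x => SchwartzMap.norm_le_seminorm ℝ f x⟩
  have t1 : ∀ x, MF (fun y => ‖f y‖ₑ) x ≠ ⊤ := MF_ne_top hB1
  have t2 : ∀ x, MF (fun y => ‖fderiv ℝ (fderiv ℝ f) y‖ₑ) x ≠ ⊤ :=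
    MF_ne_top (f := fderiv ℝ (fderiv ℝ f)) hB2
  have hpt0 := fun x => pointwise2 (f := f) (f.smooth 2) x (t1 x) (t2 x)
  have k1 := h1 f f.continuous _ hB1
  have k2 := h2 (fderiv ℝ (fderiv ℝ f)) hc2 _ hB2
  set m1 : E3 → ℝ := fun x => (MF (fun y => ‖f y‖ₑ) x).toReal with hm1
  set m2 : E3 → ℝ := fun x => (MF (fun y => ‖fderiv ℝ (fderiv ℝ f) y‖ₑ) x).toReal with hm2
  have hm1m : Measurable m1 := (measurable_MF _).ennreal_toReal
  have hm2m : Measurable m2 := (measurable_MF _).ennreal_toReal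
  have hpt : ∀ x, ‖fderiv ℝ f x‖ ≤ ‖(64 : ℝ) * (‖m1 x‖ ^ (1 / 2 : ℝ) * ‖m2 x‖ ^ (1 / 2 : ℝ))‖ := by
    intro x
    have := hpt0 x
    rw [Real.norm_of_nonneg (ENNReal.toReal_nonneg : 0 ≤ m1 x),
      Real.norm_of_nonneg (ENNReal.toReal_nonneg : 0 ≤ m2 x)]
    refine (this.trans (le_of_eq ?_)).trans (Real.le_norm_self _)
    ring
  have hol := P_holder (a := a / 2) (b := b / 2) (by positivity) (by positivity)
  rw [← add_div] at hol
  have hH := eLpNorm_le_eLpNorm_mul_eLpNorm'_of_norm (μ := (volume : Measure E3))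
    (p := P (a / 2)) (q := P (b / 2)) (r := P ((a + b) / 2))
    (f := fun x => ‖m1 x‖ ^ (1 / 2 : ℝ)) (g := fun x => ‖m2 x‖ ^ (1 / 2 : ℝ))
    (hm1m.norm.pow_const _).aestronglyMeasurable (hm2m.norm.pow_const _).aestronglyMeasurable
    (fun s t => (64 : ℝ) * (s * t)) 64 (Filter.Eventually.of_forall fun x => by
      rw [norm_mul, norm_mul]; simp [mul_assoc])
  rw [eLpNorm_norm_rpow _ (by norm_num), eLpNorm_norm_rpow _ (by norm_num), P_half ha,
    P_half hb] at hH
  refine (eLpNorm_mono hpt).trans (hH.trans ?_)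
  calc _ ≤ (64 : ℝ≥0) * (C1 * eLpNorm f (P a) volume) ^ (1 / 2 : ℝ) *
      (C2 * eLpNorm (fderiv ℝ (fderiv ℝ f)) (P b) volume) ^ (1 / 2 : ℝ) := by gcongr
    _ = _ := by
      rw [ENNReal.mul_rpow_of_nonneg _ _ (by norm_num), ENNReal.mul_rpow_of_nonneg _ _ (by norm_num),
        ENNReal.coe_mul, ENNReal.coe_mul, ENNReal.coe_rpow_of_nonneg _ (by norm_num),
        ENNReal.coe_rpow_of_nonneg _ (by norm_num)]
      ring

lemma cont_iter (f : SchwartzMap E3 ℝ) (j : ℕ) : Continuous (iteratedFDeriv ℝ j f) :=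
  (f.smooth j).continuous_iteratedFDeriv le_rfl

instance tempGrowth : (volume : Measure E3).HasTemperateGrowth := inferInstance

lemma gen_ne_top {G : Type*} [NormedAddCommGroup G] [NormedSpace ℝ G] (f : SchwartzMap E3 G)
    (p : ℝ≥0∞) : eLpNorm f p volume ≠ ⊤ := by
  have := SchwartzMap.eLpNorm_lt_top f p (volume : Measure E3) (hμ := tempGrowth)
  exact this.ne

lemma iter_succ {F : Type} [NormedAddCommGroup F] [NormedSpace ℝ F] (f : SchwartzMap E3 F) (j : ℕ)
    (p : ℝ≥0∞) : eLpNorm (fun x => ‖iteratedFDeriv ℝ j (SchwartzMap.fderivCLM ℝ E3 F f) x‖) p volume =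
      eLpNorm (fun x => ‖iteratedFDeriv ℝ (j + 1) f x‖) p volume := by
  congr 1
  ext1 x
  rw [← norm_iteratedFDeriv_fderiv]
  rfl

lemma gen_iter_ne_top (j : ℕ) (p : ℝ≥0∞) : ∀ (F : Type) [NormedAddCommGroup F] [NormedSpace ℝ F]
    (f : SchwartzMap E3 F), eLpNorm (fun x => ‖iteratedFDeriv ℝ j f x‖) p volume ≠ ⊤ := by
  induction j with
  | zero =>
    intro F _ _ f
    simp only [norm_iteratedFDeriv_zero]
    rw [eLpNorm_norm]
    exact gen_ne_top f p
  | succ j ih =>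
    intro F _ _ f
    rw [← iter_succ]
    exact ih (E3 →L[ℝ] F) (SchwartzMap.fderivCLM ℝ E3 F f)

lemma eLpNorm_iter_ne_top (f : SchwartzMap E3 ℝ) (j : ℕ) (p : ℝ≥0∞) :
    eLpNorm (iteratedFDeriv ℝ j f) p volume ≠ ⊤ := by
  rw [← eLpNorm_norm]
  exact gen_iter_ne_top j p ℝ f

lemma gen_step (a b : ℝ) (ha : 0 ≤ a) (ha1 : a < 1) (hb : 0 ≤ b) (hb1 : b < 1) (j : ℕ) :
    ∀ (F : Type) [NormedAddCommGroup F] [NormedSpace ℝ F] [CompleteSpace F],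
    ∃ C : ℝ≥0, ∀ f : SchwartzMap E3 F,
      eLpNorm (fun x => ‖iteratedFDeriv ℝ (j + 1) f x‖) (P ((a + b) / 2)) volume ≤
        C * eLpNorm (fun x => ‖iteratedFDeriv ℝ j f x‖) (P a) volume ^ (1 / 2 : ℝ) *
          eLpNorm (fun x => ‖iteratedFDeriv ℝ (j + 2) f x‖) (P b) volume ^ (1 / 2 : ℝ) := by
  induction j with
  | zero =>
    intro F _ _ _
    obtain ⟨C, hC⟩ := step (E3 := E3) a b ha ha1 hb hb1 F
    refine ⟨C, fun f => ?_⟩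
    have h := hC f
    have e2 : ∀ x, ‖iteratedFDeriv ℝ (0 + 2) f x‖ = ‖fderiv ℝ (fderiv ℝ f) x‖ := fun x => by
      rw [zero_add, ← norm_iteratedFDeriv_one, norm_iteratedFDeriv_fderiv]
    have e1 : ∀ x, ‖iteratedFDeriv ℝ (0 + 1) f x‖ = ‖fderiv ℝ f x‖ := fun x => by
      rw [zero_add, norm_iteratedFDeriv_one]
    simp only [norm_iteratedFDeriv_zero, e1, e2]
    rw [← eLpNorm_norm (fderiv ℝ f), ← eLpNorm_norm f,
      ← eLpNorm_norm (fderiv ℝ (fderiv ℝ f))] at h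
    exact h
  | succ j ih =>
    intro F _ _ _
    obtain ⟨C, hC⟩ := ih (E3 →L[ℝ] F)
    refine ⟨C, fun f => ?_⟩
    have h := hC (SchwartzMap.fderivCLM ℝ E3 F f)
    rw [iter_succ, iter_succ, iter_succ] at h
    exact h

lemma step2 (a b : ℝ) (ha : 0 ≤ a) (ha1 : a < 1) (hb : 0 ≤ b) (hb1 : b < 1) (j : ℕ) :
    ∃ C : ℝ≥0, ∀ f : SchwartzMap E3 ℝ,
      eLpNorm (iteratedFDeriv ℝ (j + 1) f) (P ((a + b) / 2)) volume ≤
        C * eLpNorm (iteratedFDeriv ℝ j f) (P a) volume ^ (1 / 2 : ℝ) *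
          eLpNorm (iteratedFDeriv ℝ (j + 2) f) (P b) volume ^ (1 / 2 : ℝ) := by
  obtain ⟨C, hC⟩ := gen_step (E3 := E3) a b ha ha1 hb hb1 j ℝ
  refine ⟨C, fun f => ?_⟩
  have h := hC f
  rw [eLpNorm_norm, eLpNorm_norm, eLpNorm_norm] at h
  exact h

lemma convex_aux (e : ℕ → ℝ) (m : ℕ) (h0 : e 0 ≤ 0) (hm : e m ≤ 0)
    (h : ∀ j, j + 2 ≤ m → 2 * e (j + 1) ≤ e j + e (j + 2)) : ∀ j ≤ m, e j ≤ 0 := by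
  have h1 : ∀ j : ℕ, j + 1 ≤ m → ((j : ℝ) + 1) * e j ≤ j * e (j + 1) := by
    intro j
    induction j with
    | zero => intro _; simpa using h0
    | succ j ih =>
      intro hj
      have i1 := ih (by omega)
      have i2 := h j (by omega)
      push_cast
      have : (0 : ℝ) ≤ j := by positivity
      nlinarith
  intro j hj
  by_contra! hc
  have hj0 : 1 ≤ j := by
    rcases Nat.eq_zero_or_pos j with h | h
    · subst h; linarith
    · exact h
  have h2 : ∀ n, j + n ≤ m → 0 < e (j + n) := by
    intro n
    induction n with
    | zero => intro _; exact hc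
    | succ n ih =>
      intro hn
      have i1 := ih (by omega)
      have i2 := h1 (j + n) (by omega)
      have : (1 : ℝ) ≤ (j + n : ℕ) := by exact_mod_cast (by omega : 1 ≤ j + n)
      by_contra! hcc
      rw [← add_assoc] at hcc
      nlinarith
  have := h2 (m - j) (by omega)
  rw [Nat.add_sub_cancel' hj] at this
  linarith

lemma logconvex (c : ℝ) (hc : 0 < c) (m : ℕ) (hm : 1 ≤ m) (j : ℕ) (hj : j ≤ m) :
    ∃ K : ℝ, 0 ≤ K ∧ ∀ x : ℕ → ℝ, (∀ i, 0 ≤ x i) →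
      (∀ i, i + 2 ≤ m → x (i + 1) ^ 2 ≤ c * (x i * x (i + 2))) →
      x j ≤ K * x 0 ^ (1 - (j : ℝ) / m) * x m ^ ((j : ℝ) / m) := by
  have hmR : (0 : ℝ) < m := by exact_mod_cast hm
  refine ⟨Real.exp (Real.log c / 2 * (j * m - j ^ 2)), (Real.exp_pos _).le, fun x hx0 hx => ?_⟩
  rcases Nat.eq_zero_or_pos j with h0 | h0
  · subst h0; simp
  rcases hj.eq_or_lt with hjm | hjm
  · subst hjm
    rw [div_self hmR.ne']
    simp [← sq]
  rcases (hx0 j).eq_or_lt with hxj | hxj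
  · rw [← hxj]
    have := hx0 0
    have := hx0 m
    positivity
  have nb : ∀ i, i + 2 ≤ m → 0 < x (i + 1) → 0 < x i ∧ 0 < x (i + 2) := by
    intro i hi hp
    have h1 := hx i hi
    have h2 : 0 < c * (x i * x (i + 2)) := lt_of_lt_of_le (by positivity) h1
    have h3 : 0 < x i * x (i + 2) := pos_of_mul_pos_right h2 hc.le
    exact ⟨pos_of_mul_pos_left h3 (hx0 _), pos_of_mul_pos_right h3 (hx0 _)⟩
  have up : ∀ n, j + n ≤ m → 0 < x (j + n) := by
    intro n
    induction n with
    | zero => intro _; exact hxj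
    | succ n ih =>
      intro hn
      have := (nb (j + n - 1) (by omega)
        (by rw [show j + n - 1 + 1 = j + n by omega]; exact ih (by omega))).2
      rwa [show j + n - 1 + 2 = j + (n + 1) by omega] at this
  have dn : ∀ n, n ≤ j → 0 < x (j - n) := by
    intro n
    induction n with
    | zero => intro _; exact hxj
    | succ n ih =>
      intro hn
      refine (nb (j - (n + 1)) (by omega) ?_).1
      rw [show j - (n + 1) + 1 = j - n by omega]; exact ih (by omega)
  have pos : ∀ i ≤ m, 0 < x i := by
    intro i hi
    rcases le_total i j with h | h
    · have := dn (j - i) (by omega)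
      rwa [show j - (j - i) = i by omega] at this
    · have := up (i - j) (by omega)
      rwa [show j + (i - j) = i by omega] at this
  set L := Real.log c
  have main := convex_aux (fun i => Real.log (x i) + L / 2 * (i : ℝ) ^ 2 -
      ((1 - (i : ℝ) / m) * Real.log (x 0) + (i : ℝ) / m * (Real.log (x m) + L / 2 * (m : ℝ) ^ 2))) m
    (by simp) (by simp [div_self hmR.ne']) (by
      intro i hi
      have p0 := pos i (by omega)
      have p1 := pos (i + 1) (by omega)
      have p2 := pos (i + 2) (by omega)
      have h1 := Real.log_le_log (by positivity) (hx i hi)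
      rw [Real.log_mul hc.ne' (by positivity), Real.log_mul p0.ne' p2.ne', Real.log_pow] at h1
      push_cast at h1 ⊢
      have e : ∀ X Y : ℝ, 2 * ((1 - ((i : ℝ) + 1) / m) * X + ((i : ℝ) + 1) / m * Y) =
        ((1 - (i : ℝ) / m) * X + (i : ℝ) / m * Y) +
        ((1 - ((i : ℝ) + 2) / m) * X + ((i : ℝ) + 2) / m * Y) := by
        intro X Y; field_simp; ring
      have e' := e (Real.log (x 0)) (Real.log (x m) + L / 2 * (m : ℝ) ^ 2)
      have h1' : 2 * Real.log (x (i + 1)) ≤ L + (Real.log (x i) + Real.log (x (i + 2))) := h1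
      linarith) j hj
  beta_reduce at main
  have q0 := pos 0 (by omega)
  have qm := pos m le_rfl
  rw [← Real.log_le_log_iff hxj (by positivity), Real.log_mul (by positivity) (by positivity),
    Real.log_mul (by positivity) (by positivity), Real.log_exp, Real.log_rpow q0, Real.log_rpow qm]
  have e : (j : ℝ) / m * (Real.log (x m) + L / 2 * (m : ℝ) ^ 2) =
      (j : ℝ) / m * Real.log (x m) + L / 2 * (j * m) := by field_simp
  rw [e] at main
  linarith

lemma GN (α β : ℝ) (ha : 0 ≤ α) (ha1 : α < 1) (hb : 0 ≤ β) (hb1 : β < 1) (i m j : ℕ)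
    (hm : 1 ≤ m) (hj : j ≤ m) : ∃ C : ℝ≥0, ∀ f : SchwartzMap E3 ℝ,
      eLpNorm (iteratedFDeriv ℝ (i + j) f) (P ((1 - (j : ℝ) / m) * α + (j : ℝ) / m * β)) volume ≤
        C * eLpNorm (iteratedFDeriv ℝ i f) (P α) volume ^ (1 - (j : ℝ) / m) *
          eLpNorm (iteratedFDeriv ℝ (i + m) f) (P β) volume ^ ((j : ℝ) / m) := by
  have hmR : (0 : ℝ) < m := by exact_mod_cast hm
  set γ : ℕ → ℝ := fun n => (1 - (n : ℝ) / m) * α + (n : ℝ) / m * β with hγ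
  have hγ01 : ∀ n ≤ m, 0 ≤ γ n ∧ γ n < 1 := by
    intro n hn
    have h1 : (n : ℝ) / m ≤ 1 := by
      rw [div_le_one hmR]; exact_mod_cast hn
    have h0 : 0 ≤ (n : ℝ) / m := by positivity
    simp only [hγ]
    generalize (n : ℝ) / m = s at *
    constructor
    · have : 0 ≤ 1 - s := by linarith
      positivity
    · have m1 : (1 - s) * α ≤ (1 - s) * max α β :=
        mul_le_mul_of_nonneg_left (le_max_left _ _) (by linarith)
      have m2 : s * β ≤ s * max α β := mul_le_mul_of_nonneg_left (le_max_right _ _) h0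
      have m3 : max α β < 1 := max_lt ha1 hb1
      have m4 : (1 - s) * max α β + s * max α β = max α β := by ring
      linarith
  have hst : ∀ n : ℕ, ∃ C : ℝ≥0, n + 2 ≤ m → ∀ f : SchwartzMap E3 ℝ,
      eLpNorm (iteratedFDeriv ℝ (i + n + 1) f) (P (γ (n + 1))) volume ≤
        C * eLpNorm (iteratedFDeriv ℝ (i + n) f) (P (γ n)) volume ^ (1 / 2 : ℝ) *
          eLpNorm (iteratedFDeriv ℝ (i + n + 2) f) (P (γ (n + 2))) volume ^ (1 / 2 : ℝ) := by
    intro n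
    by_cases hn : n + 2 ≤ m
    · obtain ⟨C, hC⟩ := step2 (E3 := E3) (γ n) (γ (n + 2)) (hγ01 n (by omega)).1 (hγ01 n (by omega)).2
        (hγ01 (n + 2) hn).1 (hγ01 (n + 2) hn).2 (i + n)
      refine ⟨C, fun _ f => ?_⟩
      have e : (γ n + γ (n + 2)) / 2 = γ (n + 1) := by
        simp only [hγ]; push_cast; field_simp; ring
      rw [← e]; exact hC f
    · exact ⟨0, fun h => absurd h hn⟩
  choose C hC using hst
  set c : ℝ := 1 + ∑ n ∈ Finset.range m, (C n : ℝ) ^ 2 with hc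
  have hcpos : 0 < c := by positivity
  obtain ⟨K, hK0, hK⟩ := logconvex c hcpos m hm j hj
  refine ⟨K.toNNReal, fun f => ?_⟩
  set x : ℕ → ℝ := fun n => (eLpNorm (iteratedFDeriv ℝ (i + n) f) (P (γ n)) volume).toReal with hx
  have hxe : ∀ n, eLpNorm (iteratedFDeriv ℝ (i + n) f) (P (γ n)) volume = ENNReal.ofReal (x n) :=
    fun n => (ENNReal.ofReal_toReal (eLpNorm_iter_ne_top f _ _)).symm
  have hx0 : ∀ n, 0 ≤ x n := fun n => ENNReal.toReal_nonneg
  have key := hK x hx0 (by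
    intro n hn
    have h1 := hC n hn f
    rw [add_assoc, add_assoc, hxe, hxe, hxe, ENNReal.ofReal_rpow_of_nonneg (hx0 _) (by norm_num),
      ENNReal.ofReal_rpow_of_nonneg (hx0 _) (by norm_num), ← ENNReal.ofReal_coe_nnreal,
      ← ENNReal.ofReal_mul (by positivity),
      ← ENNReal.ofReal_mul (mul_nonneg (by positivity) (Real.rpow_nonneg (hx0 _) _)),
      ENNReal.ofReal_le_ofReal_iff (mul_nonneg (mul_nonneg (by positivity)
        (Real.rpow_nonneg (hx0 _) _)) (Real.rpow_nonneg (hx0 _) _)),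
      ← Real.sqrt_eq_rpow, ← Real.sqrt_eq_rpow] at h1
    have hle : (C n : ℝ) ^ 2 ≤ c := by
      have := Finset.single_le_sum (f := fun n => (C n : ℝ) ^ 2) (fun _ _ => by positivity)
        (Finset.mem_range.2 (by omega : n < m))
      rw [hc]; linarith
    calc x (n + 1) ^ 2 ≤ (C n * √(x n) * √(x (n + 2))) ^ 2 := by
          have := hx0 (n + 1)
          gcongr
      _ = (C n) ^ 2 * (x n * x (n + 2)) := by
          rw [mul_pow, mul_pow, Real.sq_sqrt (hx0 _), Real.sq_sqrt (hx0 _)]; ring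
      _ ≤ _ := by
          have := hx0 n
          have := hx0 (n + 2)
          gcongr)
  have g0 : γ 0 = α := by simp [hγ]
  have gm : γ m = β := by simp [hγ, div_self hmR.ne']
  have y0 := hxe 0
  have ym := hxe m
  have yj := hxe j
  rw [g0, add_zero] at y0
  rw [gm] at ym
  have hθ : (j : ℝ) / m ≤ 1 := by rw [div_le_one hmR]; exact_mod_cast hj
  change eLpNorm (iteratedFDeriv ℝ (i + j) f) (P (γ j)) volume ≤ _
  rw [yj, y0, ym, ENNReal.ofReal_rpow_of_nonneg (hx0 _) (by linarith),
    ENNReal.ofReal_rpow_of_nonneg (hx0 _) (by positivity)]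
  change _ ≤ ENNReal.ofReal K * _ * _
  rw [← ENNReal.ofReal_mul hK0,
    ← ENNReal.ofReal_mul (mul_nonneg hK0 (Real.rpow_nonneg (hx0 _) _))]
  exact ENNReal.ofReal_le_ofReal key

lemma leibniz_pt (k : ℕ) (hk : 1 ≤ k) (g h : SchwartzMap E3 ℝ) (x : E3) :
    ‖iteratedFDeriv ℝ k (fun y => g y * h y) x - g x • iteratedFDeriv ℝ k (⇑h) x‖ ≤
      ∑ j ∈ Finset.Icc 1 k, (k.choose j : ℝ) *
        (‖iteratedFDeriv ℝ j (⇑g) x‖ * ‖iteratedFDeriv ℝ (k - j) (⇑h) x‖) := by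
  have hg : ContDiff ℝ k g := g.smooth k
  have hh : ContDiff ℝ k h := h.smooth k
  have e : (fun y => g y * h y) = (fun y => (g y - g x) * h y) + (fun y => g x • h y) := by
    ext y; simp; ring
  have hgc : ContDiff ℝ k (fun y => g y - g x) := hg.sub contDiff_const
  have hsm : ContDiff ℝ k (fun y => g x • h y) := hh.const_smul (g x)
  have hml : ContDiff ℝ k (fun y => (g y - g x) * h y) := hgc.mul hh
  have e2 : iteratedFDeriv ℝ k (fun y => g y * h y) x - g x • iteratedFDeriv ℝ k (⇑h) x =
      iteratedFDeriv ℝ k (fun y => (g y - g x) * h y) x := by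
    rw [e, iteratedFDeriv_add_apply hml.contDiffAt hsm.contDiffAt]
    have : iteratedFDeriv ℝ k (fun y => g x • h y) x = g x • iteratedFDeriv ℝ k (⇑h) x :=
      iteratedFDeriv_const_smul_apply (a := g x) (x := x) hh.contDiffAt
    rw [this, add_sub_cancel_right]
  rw [e2]
  refine (norm_iteratedFDeriv_mul_le hgc hh x le_rfl).trans ?_
  rw [Finset.sum_range_eq_add_Ico _ (by omega)]
  have z : ‖iteratedFDeriv ℝ 0 (fun y => g y - g x) x‖ = 0 := by
    rw [norm_iteratedFDeriv_zero, sub_self, norm_zero]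
  rw [z, mul_zero, zero_mul, zero_add]
  have hI : Finset.Ico 1 (k + 1) = Finset.Icc 1 k := by ext; simp
  rw [hI]
  refine Finset.sum_le_sum fun j hj => ?_
  rw [mul_assoc]
  have hj1 : 1 ≤ j := (Finset.mem_Icc.1 hj).1
  have hjk : j ≤ k := (Finset.mem_Icc.1 hj).2
  have e3 : iteratedFDeriv ℝ j (fun y => g y - g x) x = iteratedFDeriv ℝ j g x := by
    have hgj : ContDiff ℝ j g := g.smooth j
    have : (fun y => g y - g x) = ⇑g + (fun _ => -g x) := by ext y; simp [sub_eq_add_neg]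
    rw [this, iteratedFDeriv_add_apply hgj.contDiffAt contDiff_const.contDiffAt,
      iteratedFDeriv_const_of_ne (by omega)]
    simp
  rw [e3]

lemma holder_term (a b : ℝ) (ha : 0 ≤ a) (hb : 0 ≤ b) (g h : SchwartzMap E3 ℝ) (i j : ℕ) :
    eLpNorm (fun x => ‖iteratedFDeriv ℝ i (⇑g) x‖ * ‖iteratedFDeriv ℝ j (⇑h) x‖) (P (a + b)) volume ≤
      eLpNorm (iteratedFDeriv ℝ i ⇑g) (P a) volume * eLpNorm (iteratedFDeriv ℝ j ⇑h) (P b) volume := by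
  have hol := P_holder ha hb
  have := eLpNorm_le_eLpNorm_mul_eLpNorm'_of_norm (μ := (volume : Measure E3))
    (p := P a) (q := P b) (r := P (a + b))
    (f := fun x => ‖iteratedFDeriv ℝ i (⇑g) x‖) (g := fun x => ‖iteratedFDeriv ℝ j (⇑h) x‖)
    (cont_iter g i).norm.aestronglyMeasurable (cont_iter h j).norm.aestronglyMeasurable
    (fun s t => s * t) 1 (Filter.Eventually.of_forall fun x => by
      rw [norm_mul]; simp)
  rw [eLpNorm_norm, eLpNorm_norm, ENNReal.coe_one, one_mul] at this
  exact this

lemma interp (A B : ℝ≥0∞) {θ : ℝ} (h0 : 0 ≤ θ) (h1 : θ ≤ 1) : A ^ (1 - θ) * B ^ θ ≤ A + B := by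
  calc A ^ (1 - θ) * B ^ θ ≤ (A + B) ^ (1 - θ) * (A + B) ^ θ := by
        have : 0 ≤ 1 - θ := by linarith
        gcongr
        · exact le_self_add
        · exact le_add_self
    _ = A + B := by
        rw [← ENNReal.rpow_add_of_nonneg _ _ (by linarith) h0]; simp

lemma term (k j : ℕ) (hj : 1 ≤ j) (hjk : j ≤ k) (a1 a2 a3 a4 : ℝ)
    (h1 : 0 ≤ a1) (h1' : a1 < 1) (h2 : 0 ≤ a2) (h2' : a2 < 1)
    (h3 : 0 ≤ a3) (h3' : a3 < 1) (h4 : 0 ≤ a4) (h4' : a4 < 1) (hs : a1 + a2 = a3 + a4) :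
    ∃ C : ℝ≥0, ∀ g h : SchwartzMap E3 ℝ,
      eLpNorm (fun x => ‖iteratedFDeriv ℝ j (⇑g) x‖ * ‖iteratedFDeriv ℝ (k - j) (⇑h) x‖)
        (P (a1 + a2)) volume ≤
      C * (eLpNorm (iteratedFDeriv ℝ 1 ⇑g) (P a1) volume
            * eLpNorm (iteratedFDeriv ℝ (k - 1) ⇑h) (P a2) volume
          + eLpNorm (⇑h) (P a3) volume * eLpNorm (iteratedFDeriv ℝ k ⇑g) (P a4) volume) := by
  rcases hj.eq_or_lt with hj1 | hj1
  · subst hj1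
    refine ⟨1, fun g h => ?_⟩
    rw [ENNReal.coe_one, one_mul]
    exact (holder_term a1 a2 h1 h2 g h 1 (k - 1)).trans le_self_add
  obtain ⟨m, rfl⟩ : ∃ m, k = m + 1 := ⟨k - 1, by omega⟩
  obtain ⟨i, rfl⟩ : ∃ i, j = i + 1 := ⟨j - 1, by omega⟩
  obtain ⟨n, hn⟩ : ∃ n, m = i + n := ⟨m - i, by omega⟩
  have hm : 1 ≤ m := by omega
  have hmR : (0 : ℝ) < m := by exact_mod_cast hm
  obtain ⟨C1, hC1⟩ := GN (E3 := E3) a1 a4 h1 h1' h4 h4' 1 m i hm (by omega)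
  obtain ⟨C2, hC2⟩ := GN (E3 := E3) a3 a2 h3 h3' h2 h2' 0 m n hm (by omega)
  refine ⟨C1 * C2, fun g h => ?_⟩
  have k1 := hC1 g
  have k2 := hC2 h
  have hθ' : (n : ℝ) / m = 1 - (i : ℝ) / m := by
    rw [hn] at hmR ⊢; push_cast at hmR ⊢; field_simp; ring
  have hθ0 : 0 ≤ (i : ℝ) / m := by positivity
  have hθ1 : (i : ℝ) / m ≤ 1 := by rw [div_le_one hmR]; exact_mod_cast (by omega : i ≤ m)
  rw [hθ', sub_sub_cancel] at k2
  generalize (i : ℝ) / m = θ at *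
  have hθ2 : 0 ≤ 1 - θ := by linarith
  have hol := holder_term ((1 - θ) * a1 + θ * a4) (θ * a3 + (1 - θ) * a2)
    (by positivity) (by positivity) g h (1 + i) (0 + n)
  have ea : (1 - θ) * a1 + θ * a4 + (θ * a3 + (1 - θ) * a2) = a1 + a2 := by
    linear_combination (-θ) * hs
  have en : m + 1 - (i + 1) = 0 + n := by omega
  have ez : eLpNorm (iteratedFDeriv ℝ 0 ⇑h) (P a3) volume = eLpNorm (⇑h) (P a3) volume :=
    eLpNorm_congr_norm_ae (Filter.Eventually.of_forall fun x => norm_iteratedFDeriv_zero)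
  rw [ea] at hol
  rw [zero_add m, ez] at k2
  rw [add_comm 1 i] at hol k1
  rw [add_comm 1 m] at k1
  rw [en, add_tsub_cancel_right]
  refine hol.trans ((mul_le_mul' k1 k2).trans ?_)
  generalize eLpNorm (iteratedFDeriv ℝ 1 ⇑g) (P a1) volume = X1
  generalize eLpNorm (iteratedFDeriv ℝ m ⇑h) (P a2) volume = X2
  generalize eLpNorm (⇑h) (P a3) volume = X3
  generalize eLpNorm (iteratedFDeriv ℝ (m + 1) ⇑g) (P a4) volume = X4
  calc _ = (C1 * C2 : ℝ≥0∞) * ((X1 * X2) ^ (1 - θ) * (X3 * X4) ^ θ) := by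
        rw [ENNReal.mul_rpow_of_nonneg _ _ hθ2, ENNReal.mul_rpow_of_nonneg _ _ hθ0]; ring
    _ ≤ _ := by
        rw [ENNReal.coe_mul]
        gcongr
        exact interp _ _ hθ0 hθ1

lemma gen_main (k : ℕ) (hk : 1 ≤ k) (a1 a2 a3 a4 : ℝ)
    (h1 : 0 ≤ a1) (h2 : 0 ≤ a2) (h3 : 0 ≤ a3) (h4 : 0 ≤ a4) (hs : a1 + a2 = a3 + a4)
    (hlt : a1 + a2 < 1) :
    ∃ C : ℝ≥0, 0 < C ∧ ∀ g h : SchwartzMap E3 ℝ,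
      eLpNorm
          (fun x => iteratedFDeriv ℝ k (fun y => g y * h y) x - g x • iteratedFDeriv ℝ k (⇑h) x)
          (P (a1 + a2)) volume ≤
        (C : ℝ≥0∞) * eLpNorm (iteratedFDeriv ℝ 1 ⇑g) (P a1) volume
            * eLpNorm (iteratedFDeriv ℝ (k - 1) ⇑h) (P a2) volume
          + (C : ℝ≥0∞) * eLpNorm (⇑h) (P a3) volume
              * eLpNorm (iteratedFDeriv ℝ k ⇑g) (P a4) volume := by
  have ht : ∀ j : ℕ, ∃ C : ℝ≥0, j ∈ Finset.Icc 1 k → ∀ g h : SchwartzMap E3 ℝ,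
      eLpNorm (fun x => ‖iteratedFDeriv ℝ j (⇑g) x‖ * ‖iteratedFDeriv ℝ (k - j) (⇑h) x‖)
        (P (a1 + a2)) volume ≤
      C * (eLpNorm (iteratedFDeriv ℝ 1 ⇑g) (P a1) volume
            * eLpNorm (iteratedFDeriv ℝ (k - 1) ⇑h) (P a2) volume
          + eLpNorm (⇑h) (P a3) volume * eLpNorm (iteratedFDeriv ℝ k ⇑g) (P a4) volume) := by
    intro j
    by_cases hj : j ∈ Finset.Icc 1 k
    · obtain ⟨C, hC⟩ := term (E3 := E3) k j (Finset.mem_Icc.1 hj).1 (Finset.mem_Icc.1 hj).2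
        a1 a2 a3 a4 h1 (by linarith) h2 (by linarith) h3 (by linarith) h4 (by linarith) hs
      exact ⟨C, fun _ => hC⟩
    · exact ⟨0, fun h => absurd h hj⟩
  choose C hC using ht
  refine ⟨1 + ∑ j ∈ Finset.Icc 1 k, (k.choose j : ℝ≥0) * C j, by positivity, fun g h => ?_⟩
  have hP : 1 ≤ P (a1 + a2) := by
    rw [P, ENNReal.one_le_inv, ENNReal.ofReal_le_one]; exact hlt.le
  rw [mul_assoc, mul_assoc, ← mul_add]
  refine (eLpNorm_mono_real (leibniz_pt k hk g h)).trans ?_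
  have hfun : (fun x => ∑ j ∈ Finset.Icc 1 k, (k.choose j : ℝ) *
        (‖iteratedFDeriv ℝ j (⇑g) x‖ * ‖iteratedFDeriv ℝ (k - j) (⇑h) x‖)) =
      ∑ j ∈ Finset.Icc 1 k, (k.choose j : ℝ) • fun x =>
        (‖iteratedFDeriv ℝ j (⇑g) x‖ * ‖iteratedFDeriv ℝ (k - j) (⇑h) x‖) := by
    ext x; simp
  rw [hfun]
  refine (eLpNorm_sum_le (fun j _ => ?_) hP).trans ?_
  · exact (((cont_iter g j).norm.mul (cont_iter h (k - j)).norm).const_smul _).aestronglyMeasurable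
  push_cast
  rw [add_mul, Finset.sum_mul]
  refine le_trans (Finset.sum_le_sum fun j hj => ?_) le_add_self
  rw [eLpNorm_const_smul, mul_assoc]
  gcongr
  · simp
  · exact hC j hj g h

lemma eq_P {r : ℝ≥0∞} (hr : 1 ≤ r) : r = P (r⁻¹).toReal := by
  rw [P, ENNReal.ofReal_toReal, inv_inv]
  rw [ENNReal.inv_ne_top]
  exact (zero_lt_one.trans_le hr).ne'

lemma add_P {r r1 r2 : ℝ≥0∞} (h1 : 1 ≤ r1) (h2 : 1 ≤ r2)
    (h : 1 / r1 + 1 / r2 = 1 / r) : (r1⁻¹).toReal + (r2⁻¹).toReal = (r⁻¹).toReal := by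
  rw [← ENNReal.toReal_add]
  · simp only [one_div] at h
    rw [h]
  · rw [ENNReal.inv_ne_top]; exact (zero_lt_one.trans_le h1).ne'
  · rw [ENNReal.inv_ne_top]; exact (zero_lt_one.trans_le h2).ne'

end CommLeib

instance fact_finrank_three : Fact (Module.finrank ℝ (EuclideanSpace ℝ (Fin 3)) = 3) :=
  ⟨by simp⟩

/-- Commutator estimate: for exponents `1 < r, r₂, r₄ < ∞`, `1 ≤ r₁, r₃ ≤ ∞` with
`1/r₁ + 1/r₂ = 1/r₃ + 1/r₄ = 1/r` and every `k ≥ 1`, there is `C > 0` such that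
`‖∇^k(gh) − g∇^k h‖_{L^r} ≤ C ‖∇g‖_{L^{r₁}} ‖∇^{k−1} h‖_{L^{r₂}} + C ‖h‖_{L^{r₃}} ‖∇^k g‖_{L^{r₄}}`. -/
theorem commutator_leibniz_estimate (k : ℕ) (hk : 1 ≤ k) (r r₁ r₂ r₃ r₄ : ℝ≥0∞)
    (hr : 1 < r) (hr' : r < ⊤) (hr₂ : 1 < r₂) (hr₂' : r₂ < ⊤)
    (hr₄ : 1 < r₄) (hr₄' : r₄ < ⊤) (hr₁ : 1 ≤ r₁) (hr₃ : 1 ≤ r₃)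
    (h12 : 1 / r₁ + 1 / r₂ = 1 / r) (h34 : 1 / r₃ + 1 / r₄ = 1 / r) :
    ∃ C : ℝ≥0, 0 < C ∧ ∀ g h : SchwartzMap (EuclideanSpace ℝ (Fin 3)) ℝ,
      eLpNorm
          (fun x => iteratedFDeriv ℝ k (fun y => g y * h y) x - g x • iteratedFDeriv ℝ k (⇑h) x)
          r volume ≤
        (C : ℝ≥0∞) * eLpNorm (iteratedFDeriv ℝ 1 ⇑g) r₁ volume
            * eLpNorm (iteratedFDeriv ℝ (k - 1) ⇑h) r₂ volume
          + (C : ℝ≥0∞) * eLpNorm (⇑h) r₃ volume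
              * eLpNorm (iteratedFDeriv ℝ k ⇑g) r₄ volume := by
  have e12 := CommLeib.add_P hr₁ hr₂.le h12
  have e34 := CommLeib.add_P hr₃ hr₄.le h34
  have hlt : (r⁻¹).toReal < 1 := by
    rw [← ENNReal.toReal_one]
    exact (ENNReal.toReal_lt_toReal (ENNReal.inv_ne_top.2 (zero_lt_one.trans hr).ne')
      ENNReal.one_ne_top).2 (ENNReal.inv_lt_one.2 hr)
  have main := CommLeib.gen_main (E3 := EuclideanSpace ℝ (Fin 3)) k hk
    (r₁⁻¹).toReal (r₂⁻¹).toReal (r₃⁻¹).toReal (r₄⁻¹).toReal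
    ENNReal.toReal_nonneg ENNReal.toReal_nonneg ENNReal.toReal_nonneg ENNReal.toReal_nonneg
    (e12.trans e34.symm) (e12 ▸ hlt)
  rw [e12, ← CommLeib.eq_P hr.le, ← CommLeib.eq_P hr₁, ← CommLeib.eq_P hr₂.le,
    ← CommLeib.eq_P hr₃, ← CommLeib.eq_P hr₄.le] at main
  exact main
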